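/- Let I ⊆ ℝ be an interval and let p, b, a : I → ℂ be differentiable with |p(t)| < 1 for all t ∈ I, satisfying i p' = (N − (1−|p|²)E)p + a·conj(b), i b' = (N+E)b + E·a·conj(p), i a' = (N−E)a − E|p|²·b·p, where E(t) = |b(t)p(t)+a(t)|²/(1−|p(t)|²)² and N(t) = |b(t)|² + (1−|p(t)|²)E(t), and set S(t) = (N+E)|p|² + (E/2)|p|⁴ + 2Re(a·conj(b)·conj(p)). Then the real function x(t) := |p(t)|² satisfies, for all t ∈ I, the equation x'(t)² + c_0 + c_1 x + c_2 x² + c_3 x³ + c_4 x⁴ = 0 with c_4 = −(7/4)E², c_3 = 3E² − NE, c_2 = N² + 2NE − 3E² + 3ES, c_1 = 4E² + 2NS − 4NE − 6ES, c_0 = S². -/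

import Mathlib

open ComplexConjugate

/-- `E = |bp+a|² / (1-|p|²)²`, evaluated pointwise in time. -/
noncomputable def Etr (p b a : ℝ → ℂ) (t : ℝ) : ℝ :=
  ‖b t * p t + a t‖ ^ 2 / (1 - ‖p t‖ ^ 2) ^ 2

/-- `N = |b|² + (1-|p|²) E`, evaluated pointwise in time. -/
noncomputable def Ntr (p b a : ℝ → ℂ) (t : ℝ) : ℝ :=
  ‖b t‖ ^ 2 + (1 - ‖p t‖ ^ 2) * Etr p b a t

/-- `S = (N+E)|p|² + (E/2)|p|⁴ + 2 Re(a conj(b) conj(p))`, evaluated pointwise. -/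
noncomputable def Str (p b a : ℝ → ℂ) (t : ℝ) : ℝ :=
  (Ntr p b a t + Etr p b a t) * ‖p t‖ ^ 2 + (Etr p b a t / 2) * ‖p t‖ ^ 4
    + 2 * (a t * conj (b t) * conj (p t)).re

/-! Write `x = ‖p‖²` and `z = a conj(b) conj(p)`. The real multiple of `p` in the equation for `p`
only rotates the phase, so the derivative of `x` is `2 Im z`. On the other hand the definitions of
`E`, `N` and `S` can be solved for `‖a‖²`, `‖b‖²` and `2 Re z` as polynomials in `x` with
coefficients in `E`, `N`, `S`, and substituting these into
`(2 Im z)² = 4 ‖a‖² ‖b‖² ‖p‖² - (2 Re z)²` gives the effective potential. -/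

/-- The effective potential `V_eff(x) = c₀ + c₁ x + c₂ x² + c₃ x³ + c₄ x⁴` of the `L(1)` system, as
a function of the values of `E`, `N`, `S` and of the position `x`. -/
noncomputable def effectivePotential (E N S x : ℝ) : ℝ :=
  S ^ 2 + (4 * E ^ 2 + 2 * N * S - 4 * N * E - 6 * E * S) * x
    + (N ^ 2 + 2 * N * E - 3 * E ^ 2 + 3 * E * S) * x ^ 2
    + (3 * E ^ 2 - N * E) * x ^ 3 + (-(7 / 4) * E ^ 2) * x ^ 4

theorem effectivePotential_eq_sq_sub (E N S x : ℝ) :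
    effectivePotential E N S x =
      (S - (N + E) * x - E / 2 * x ^ 2) ^ 2
        - 4 * ((E - S + E / 2 * x ^ 2) * (N - (1 - x) * E) * x) := by
  unfold effectivePotential
  ring

theorem norm_mul_add_sq (a b p : ℂ) :
    ‖b * p + a‖ ^ 2 = ‖b‖ ^ 2 * ‖p‖ ^ 2 + ‖a‖ ^ 2 + 2 * (a * conj b * conj p).re := by
  have cross_term : (b * p * conj a).re = (a * conj b * conj p).re := by
    rw [← Complex.conj_re]
    simp only [map_mul, Complex.conj_conj]
    ring_nf
  rw [Complex.sq_norm, Complex.normSq_add, cross_term]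
  simp only [Complex.normSq_eq_norm_sq, norm_mul, mul_pow]

theorem im_mul_conj_mul_conj_sq (a b p : ℂ) :
    (a * conj b * conj p).im ^ 2 =
      ‖a‖ ^ 2 * ‖b‖ ^ 2 * ‖p‖ ^ 2 - (a * conj b * conj p).re ^ 2 := by
  rw [← Complex.sq_norm_sub_sq_re]
  simp only [norm_mul, Complex.norm_conj, mul_pow]

theorem real_inner_eq_im_mul_conj {p q z : ℂ} {r : ℝ} (h : Complex.I * q = r * p + z) :
    inner ℝ p q = (z * conj p).im := by
  calc inner ℝ p q = (Complex.I * q * conj p).im := by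
        rw [Complex.inner, mul_assoc, Complex.I_mul_im, mul_comm q]
    _ = (((r * Complex.normSq p : ℝ) : ℂ) + z * conj p).im := by
        rw [h, add_mul, mul_assoc, Complex.mul_conj, Complex.ofReal_mul]
    _ = (z * conj p).im := by
        rw [Complex.add_im, Complex.ofReal_im, zero_add]

theorem deriv_norm_sq_eq_two_mul_im {p : ℝ → ℂ} {t r : ℝ} {z : ℂ} (hp : DifferentiableAt ℝ p t)
    (h : Complex.I * deriv p t = r * p t + z) :
    deriv (fun τ => ‖p τ‖ ^ 2) t = 2 * (z * conj (p t)).im := by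
  rw [hp.hasDerivAt.norm_sq.deriv, real_inner_eq_im_mul_conj h]

section

variable (p b a : ℝ → ℂ) (t : ℝ)

theorem norm_b_sq_eq_Ntr_sub :
    ‖b t‖ ^ 2 = Ntr p b a t - (1 - ‖p t‖ ^ 2) * Etr p b a t := by
  unfold Ntr
  ring

theorem two_mul_re_eq_Str_sub :
    2 * (a t * conj (b t) * conj (p t)).re =
      Str p b a t - (Ntr p b a t + Etr p b a t) * ‖p t‖ ^ 2
        - Etr p b a t / 2 * (‖p t‖ ^ 2) ^ 2 := by
  unfold Str
  ring

variable {p t}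

theorem Etr_mul_one_sub_sq (hp : ‖p t‖ ≠ 1) :
    Etr p b a t * (1 - ‖p t‖ ^ 2) ^ 2 = ‖b t * p t + a t‖ ^ 2 := by
  have hsq : ‖p t‖ ^ 2 ≠ 1 := by
    rwa [Ne, pow_eq_one_iff_of_nonneg (norm_nonneg _) two_ne_zero]
  exact div_mul_cancel₀ _ (pow_ne_zero 2 (sub_ne_zero.mpr hsq.symm))

theorem norm_a_sq_eq_Etr_sub_Str_add (hp : ‖p t‖ ≠ 1) :
    ‖a t‖ ^ 2 = Etr p b a t - Str p b a t + Etr p b a t / 2 * (‖p t‖ ^ 2) ^ 2 := by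
  have hE := Etr_mul_one_sub_sq b a hp
  rw [norm_mul_add_sq, norm_b_sq_eq_Ntr_sub p b a t, two_mul_re_eq_Str_sub] at hE
  linear_combination -hE

end

theorem truncated_szego_L1_effective_potential_general {p b a : ℝ → ℂ} {t r : ℝ}
    (hp : DifferentiableAt ℝ p t) (hp1 : ‖p t‖ ≠ 1)
    (hode : Complex.I * deriv p t = r * p t + a t * conj (b t)) :
    (deriv (fun τ => ‖p τ‖ ^ 2) t) ^ 2
      + effectivePotential (Etr p b a t) (Ntr p b a t) (Str p b a t) (‖p t‖ ^ 2) = 0 := by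
  rw [deriv_norm_sq_eq_two_mul_im hp hode, mul_pow, im_mul_conj_mul_conj_sq,
    effectivePotential_eq_sq_sub, ← two_mul_re_eq_Str_sub, ← norm_a_sq_eq_Etr_sub_Str_add b a hp1,
    ← norm_b_sq_eq_Ntr_sub]
  ring

/-- Along solutions of the truncated Szegő `L(1)` ODE system, `x = |p|²` obeys
`x'² + c₀ + c₁ x + c₂ x² + c₃ x³ + c₄ x⁴ = 0` with
`c₄ = -(7/4)E²`, `c₃ = 3E² - NE`, `c₂ = N² + 2NE - 3E² + 3ES`,
`c₁ = 4E² + 2NS - 4NE - 6ES`, `c₀ = S²`. -/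
theorem truncated_szego_L1_effective_potential (I : Set ℝ) (hI : I.OrdConnected)
    (p b a : ℝ → ℂ)
    (hp : ∀ t ∈ I, DifferentiableAt ℝ p t)
    (hb : ∀ t ∈ I, DifferentiableAt ℝ b t)
    (ha : ∀ t ∈ I, DifferentiableAt ℝ a t)
    (hp1 : ∀ t ∈ I, ‖p t‖ < 1)
    (hode : ∀ t ∈ I,
      Complex.I * deriv p t =
        ((Ntr p b a t - (1 - ‖p t‖ ^ 2) * Etr p b a t : ℝ) : ℂ) * p t
          + a t * conj (b t) ∧
      Complex.I * deriv b t =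
        ((Ntr p b a t + Etr p b a t : ℝ) : ℂ) * b t
          + (Etr p b a t : ℂ) * a t * conj (p t) ∧
      Complex.I * deriv a t =
        ((Ntr p b a t - Etr p b a t : ℝ) : ℂ) * a t
          - ((Etr p b a t * ‖p t‖ ^ 2 : ℝ) : ℂ) * b t * p t) :
    ∀ t ∈ I,
      (deriv (fun τ : ℝ => ‖p τ‖ ^ 2) t) ^ 2
        + (Str p b a t) ^ 2
        + (4 * (Etr p b a t) ^ 2 + 2 * Ntr p b a t * Str p b a t
            - 4 * Ntr p b a t * Etr p b a t - 6 * Etr p b a t * Str p b a t)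
          * ‖p t‖ ^ 2
        + ((Ntr p b a t) ^ 2 + 2 * Ntr p b a t * Etr p b a t - 3 * (Etr p b a t) ^ 2
            + 3 * Etr p b a t * Str p b a t) * (‖p t‖ ^ 2) ^ 2
        + (3 * (Etr p b a t) ^ 2 - Ntr p b a t * Etr p b a t) * (‖p t‖ ^ 2) ^ 3
        + (-(7 / 4) * (Etr p b a t) ^ 2) * (‖p t‖ ^ 2) ^ 4 = 0 := by
  intro t ht
  simpa only [effectivePotential, ← add_assoc] using
    truncated_szego_L1_effective_potential_general (hp t ht) (hp1 t ht).ne (hode t ht).1
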